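/- (Otto–Villani theorem) Let μ be a Borel probability measure on ℝ^k and C > 0. Suppose μ satisfies the logarithmic Sobolev inequality LS(C): Ent_μ(f²) ≤ C ∫ |∇f|² dμ for every Lipschitz function f : ℝ^k → ℝ (∇f denoting its almost-everywhere defined gradient). Then μ satisfies the transport inequality T₂(C): W₂²(ν,μ) ≤ C H(ν|μ) for all ν ∈ P(ℝ^k), where W₂ is the Wasserstein distance of order 2 for the Euclidean distance. -/

import Mathlib

open MeasureTheory ENNReal

/-- The optimal transport cost `𝒯_c(ν, μ)` associated with the cost function `c`:
the infimum of `∫ c dπ` over all couplings `π` of `ν` and `μ`. -/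
noncomputable def optCost {X : Type*} [MeasurableSpace X] (c : X → X → ℝ)
    (ν μ : Measure X) : ℝ≥0∞ :=
  ⨅ (π : Measure (X × X)) (_ : π.map Prod.fst = ν ∧ π.map Prod.snd = μ),
    ∫⁻ p, ENNReal.ofReal (c p.1 p.2) ∂π

open Classical in
/-- The relative entropy `H(ν|μ)`: it equals `∫ h(dν/dμ) dμ` with
`h(t) = t log t - t + 1 ≥ 0` if `ν ≪ μ`, and `+∞` otherwise.  For probability
measures `ν ≪ μ` this coincides with `∫ log (dν/dμ) dν`. -/
noncomputable def relEntropy {X : Type*} [MeasurableSpace X] (ν μ : Measure X) : ℝ≥0∞ :=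
  if ν ≪ μ then
    ∫⁻ x, ENNReal.ofReal ((ν.rnDeriv μ x).toReal * Real.log (ν.rnDeriv μ x).toReal
      - (ν.rnDeriv μ x).toReal + 1) ∂μ
  else ∞

/-- The local Lipschitz constant (slope) `|∇f|(x) = limsup_{y→x} |f(y)−f(x)|/|y−x|`. -/
noncomputable def localSlope {E : Type*} [MetricSpace E] (f : E → ℝ) (x : E) : ℝ :=
  Filter.limsup (fun y => |f y - f x| / dist y x) (nhdsWithin x {x}ᶜ)

/-! Write `P t = t • Q_t f`, where `Q_t f x = inf_y (f y + d(x, y)² / t)`. This is an infimum of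
affine functions of `t`, and comparing almost minimizers at different times shows that `t ↦ P t x`
satisfies the Hamilton–Jacobi inequality in which `|∇ P t|²` controls the time derivative.
Inserted into the logarithmic Sobolev inequality for `exp (P t / (2C))`, it makes
`t ↦ t⁻¹ log ∫ exp (P t / C) dμ` nonincreasing. Since this quantity tends to `C⁻¹ ∫ f dμ` as
`t → 0`, its value at `t = 1` gives `log ∫ exp (Q_1 f / C) dμ ≤ C⁻¹ ∫ f dμ`. The Donsker–Varadhan
inequality then bounds `∫ Q_1 f dν - ∫ f dμ` by `C H(ν|μ)`, and Kantorovich duality turns this into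
a coupling.

Only duality for bounded Lipschitz costs is needed: it follows from a finite discretization, where
it is an instance of the M. Riesz extension theorem. The truncation of `d²` is then removed using
the finite second moments that the truncated inequalities themselves imply. -/

open Filter Set ProbabilityTheory InformationTheory
open scoped Topology NNReal

namespace OttoVillani

section LocalSlope

theorem abs_exp_sub_exp_le (p q : ℝ) :
    |Real.exp p - Real.exp q| ≤ max (Real.exp p) (Real.exp q) * |p - q| := by
  wlog h : q ≤ p generalizing p q
  · rw [abs_sub_comm, abs_sub_comm p, max_comm]
    exact this q p (le_of_not_ge h)
  have hexp : Real.exp q ≤ Real.exp p := Real.exp_le_exp.2 h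
  rw [abs_of_nonneg (sub_nonneg.2 hexp), abs_of_nonneg (sub_nonneg.2 h), max_eq_left hexp]
  calc Real.exp p - Real.exp q = Real.exp p * (1 - Real.exp (q - p)) := by
        rw [mul_sub, mul_one, ← Real.exp_add, add_sub_cancel]
    _ ≤ Real.exp p * (p - q) :=
        mul_le_mul_of_nonneg_left (by linarith [Real.add_one_le_exp (q - p)]) (Real.exp_pos p).le

theorem lipschitzWith_exp_comp {X : Type*} [PseudoMetricSpace X] {g : X → ℝ} {b : ℝ}
    {L : ℝ≥0} (hb : ∀ x, g x ≤ b) (hg : LipschitzWith L g) :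
    LipschitzWith (Real.toNNReal (Real.exp b) * L) fun x => Real.exp (g x) := by
  refine LipschitzWith.of_dist_le_mul fun x y => ?_
  rw [Real.dist_eq, NNReal.coe_mul, Real.coe_toNNReal _ (Real.exp_pos b).le, mul_assoc]
  refine (abs_exp_sub_exp_le _ _).trans (mul_le_mul ?_ (hg.dist_le_mul x y) (abs_nonneg _)
    (Real.exp_pos b).le)
  exact max_le (Real.exp_le_exp.2 (hb x)) (Real.exp_le_exp.2 (hb y))

variable {X : Type*} [MetricSpace X] {f g w : X → ℝ} {x : X}

theorem localSlope_nonneg (f : X → ℝ) (x : X) : 0 ≤ localSlope f x := by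
  rw [localSlope, limsup_eq]
  rcases eq_or_neBot (𝓝[≠] x) with hbot | _
  · simp [hbot]
  · refine Real.sInf_nonneg fun a ha => ?_
    obtain ⟨y, hy⟩ := Eventually.exists (f := 𝓝[≠] x) ha
    exact le_trans (by positivity) hy

theorem localSlope_le (hw : ContinuousAt w x) (hw₀ : 0 ≤ w x)
    (h : ∀ y, |f y - f x| ≤ w y * dist y x) : localSlope f x ≤ w x := by
  rw [localSlope]
  rcases eq_or_neBot (𝓝[≠] x) with hbot | _
  · rw [hbot, limsup_eq]
    simpa using hw₀
  · have hlim : Tendsto w (𝓝[≠] x) (𝓝 (w x)) := hw.tendsto.mono_left nhdsWithin_le_nhds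
    rw [← hlim.limsup_eq]
    refine limsup_le_limsup ?_ (isCoboundedUnder_le_of_le _ (x := 0) fun y => by positivity)
      hlim.isBoundedUnder_le
    filter_upwards [self_mem_nhdsWithin] with y hy
    exact (div_le_iff₀ (dist_pos.2 hy)).2 (h y)

theorem localSlope_exp_comp_le (hg : ContinuousAt g x) (hw : ContinuousAt w x) (hw₀ : 0 ≤ w x)
    (h : ∀ y, |g y - g x| ≤ w y * dist y x) :
    localSlope (fun y => Real.exp (g y)) x ≤ Real.exp (g x) * w x := by
  have hmax := localSlope_le (f := fun y => Real.exp (g y)) (x := x)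
    (w := fun y => max (Real.exp (g y)) (Real.exp (g x)) * w y) (by fun_prop)
    (by positivity) fun y => ?_
  · simpa only [max_self] using hmax
  · rw [mul_assoc]
    exact (abs_exp_sub_exp_le _ _).trans (by gcongr; exact h y)

end LocalSlope

section HopfLax

/-- The Hopf–Lax semigroup `Q_t f x = inf_y (f y + d(x, y)² / t)` multiplied by the time `t`, which
makes it an infimum of affine functions of `t` that is meaningful also at `t = 0`. -/
noncomputable def scaledHopfLax {X : Type*} [PseudoMetricSpace X] (f : X → ℝ) (t : ℝ) (x : X) : ℝ :=
  ⨅ y, (t * f y + dist x y ^ 2)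

variable {X : Type*} [PseudoMetricSpace X] {f : X → ℝ} {B s t : ℝ}

theorem neg_le_add_dist_sq (hf : ∀ x, |f x| ≤ B) (t : ℝ) (x y : X) :
    -(B * |t|) ≤ t * f y + dist x y ^ 2 := by
  have : |t * f y| ≤ B * |t| := by
    rw [abs_mul, mul_comm]
    exact mul_le_mul_of_nonneg_right (hf y) (abs_nonneg t)
  linarith [neg_abs_le (t * f y), sq_nonneg (dist x y)]

theorem scaledHopfLax_le (hf : ∀ x, |f x| ≤ B) (t : ℝ) (x y : X) :
    scaledHopfLax f t x ≤ t * f y + dist x y ^ 2 :=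
  ciInf_le ⟨_, forall_mem_range.2 (neg_le_add_dist_sq hf t x)⟩ y

theorem scaledHopfLax_le_mul_self (hf : ∀ x, |f x| ≤ B) (t : ℝ) (x : X) :
    scaledHopfLax f t x ≤ t * f x := by
  simpa using scaledHopfLax_le hf t x x

theorem le_scaledHopfLax {a : ℝ} {x : X} (h : ∀ y, a ≤ t * f y + dist x y ^ 2) :
    a ≤ scaledHopfLax f t x :=
  have : Nonempty X := ⟨x⟩
  le_ciInf h

theorem scaledHopfLax_le_add (hf : ∀ x, |f x| ≤ B) (s t : ℝ) (x : X) :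
    scaledHopfLax f s x ≤ scaledHopfLax f t x + B * |s - t| := by
  rw [← sub_le_iff_le_add]
  refine le_scaledHopfLax fun y => ?_
  have hle := scaledHopfLax_le hf s x y
  have hst : (s - t) * f y ≤ B * |s - t| := by
    rw [mul_comm B]
    exact (le_abs_self _).trans
      ((abs_mul _ _).trans_le (mul_le_mul_of_nonneg_left (hf y) (abs_nonneg _)))
  linarith

theorem abs_scaledHopfLax_sub_le (hf : ∀ x, |f x| ≤ B) (s t : ℝ) (x : X) :
    |scaledHopfLax f s x - scaledHopfLax f t x| ≤ B * |s - t| := by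
  have hst := scaledHopfLax_le_add hf s t x
  have hts := scaledHopfLax_le_add hf t s x
  rw [abs_sub_comm t s] at hts
  exact abs_sub_le_iff.2 ⟨by linarith, by linarith⟩

theorem scaledHopfLax_zero (f : X → ℝ) (x : X) : scaledHopfLax f 0 x = 0 := by
  refine le_antisymm ?_ (le_scaledHopfLax fun y => by simp)
  simpa [scaledHopfLax] using
    ciInf_le ⟨0, forall_mem_range.2 fun y => sq_nonneg (dist x y)⟩ x

theorem abs_scaledHopfLax_le (hf : ∀ x, |f x| ≤ B) (t : ℝ) (x : X) :
    |scaledHopfLax f t x| ≤ B * |t| := by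
  simpa [scaledHopfLax_zero] using abs_scaledHopfLax_sub_le hf t 0 x

theorem mul_scaledHopfLax_le (hf : ∀ x, |f x| ≤ B) (ht : 0 ≤ t) (hts : t ≤ s) (x : X) :
    t * scaledHopfLax f s x ≤ s * scaledHopfLax f t x := by
  have : Nonempty X := ⟨x⟩
  have hs : 0 ≤ s := ht.trans hts
  change _ ≤ s * ⨅ y, (t * f y + dist x y ^ 2)
  rw [Real.mul_iInf_of_nonneg hs]
  refine le_ciInf fun y => ?_
  have hle := mul_le_mul_of_nonneg_left (scaledHopfLax_le hf s x y) ht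
  linarith [mul_le_mul_of_nonneg_right hts (sq_nonneg (dist x y))]

/-- Comparing the values at times `t < s` controls how far from `x'` the almost minimizers at
time `t` can be, which replaces the existence of minimizers. -/
theorem scaledHopfLax_le_add_mul_dist (hf : ∀ x, |f x| ≤ B) (ht : 0 ≤ t) (hts : t < s)
    (x x' : X) :
    scaledHopfLax f t x ≤ scaledHopfLax f t x' +
      (2 * √((s * scaledHopfLax f t x' - t * scaledHopfLax f s x') / (s - t)) + dist x x') *
        dist x x' := by
  have : Nonempty X := ⟨x⟩
  have hst : 0 < s - t := sub_pos.2 hts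
  have hs : 0 ≤ s := ht.trans hts.le
  set Φ : ℝ → ℝ := fun v =>
    v + (2 * √((s * v - t * scaledHopfLax f s x') / (s - t)) + dist x x') * dist x x' with hΦ
  have hmono : Monotone Φ := fun v v' hv => by simp only [hΦ]; gcongr
  have hcont : Continuous Φ := by fun_prop
  change _ ≤ Φ (⨅ y, (t * f y + dist x' y ^ 2))
  rw [hmono.map_ciInf_of_continuousAt hcont.continuousAt
    ⟨_, forall_mem_range.2 (neg_le_add_dist_sq hf t x')⟩]
  refine le_ciInf fun y => ?_
  have hdist : dist x' y ≤
      √((s * (t * f y + dist x' y ^ 2) - t * scaledHopfLax f s x') / (s - t)) := by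
    refine Real.le_sqrt_of_sq_le ((le_div_iff₀ hst).2 ?_)
    linarith [mul_le_mul_of_nonneg_left (scaledHopfLax_le hf s x' y) ht]
  calc scaledHopfLax f t x ≤ t * f y + dist x y ^ 2 := scaledHopfLax_le hf t x y
    _ ≤ t * f y + (dist x x' + dist x' y) ^ 2 := by gcongr; exact dist_triangle x x' y
    _ = t * f y + dist x' y ^ 2 + (2 * dist x' y + dist x x') * dist x x' := by ring
    _ ≤ Φ (t * f y + dist x' y ^ 2) := by simp only [hΦ]; gcongr

theorem scaledHopfLax_sub_div_le (hf : ∀ x, |f x| ≤ B) (ht : 0 ≤ t) (hts : t < s) (x : X) :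
    (s * scaledHopfLax f t x - t * scaledHopfLax f s x) / (s - t) ≤ 2 * (B * t) := by
  have hst : 0 < s - t := sub_pos.2 hts
  have hval := (abs_le.1 (abs_scaledHopfLax_le hf t x)).2
  have hdiff := scaledHopfLax_le_add hf t s x
  rw [abs_of_nonneg ht] at hval
  rw [abs_sub_comm, abs_of_pos hst] at hdiff
  rw [div_le_iff₀ hst]
  nlinarith [mul_le_mul_of_nonneg_left hdiff ht, mul_le_mul_of_nonneg_left hval hst.le]

theorem lipschitzWith_scaledHopfLax (hf : ∀ x, |f x| ≤ B) (ht : 0 ≤ t) :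
    LipschitzWith (Real.toNNReal ((√(2 * (B * t)) + 1) ^ 2)) (scaledHopfLax f t) := by
  refine LipschitzWith.of_le_add_mul' _ fun x x' => ?_
  have hB : 0 ≤ B := (abs_nonneg _).trans (hf x)
  have hBt : 0 ≤ 2 * (B * t) := by positivity
  have hsq := Real.sq_sqrt hBt
  rcases le_total (dist x x') 1 with hnear | hfar
  · refine (scaledHopfLax_le_add_mul_dist hf ht (lt_add_one t) x x').trans ?_
    gcongr
    have := Real.sqrt_le_sqrt (scaledHopfLax_sub_div_le hf ht (lt_add_one t) x')
    nlinarith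
  · have hx := (abs_le.1 (abs_scaledHopfLax_le hf t x)).2
    have hx' := (abs_le.1 (abs_scaledHopfLax_le hf t x')).1
    rw [abs_of_nonneg ht] at hx hx'
    nlinarith [Real.sqrt_nonneg (2 * (B * t)),
      mul_nonneg (sq_nonneg (√(2 * (B * t)) + 1)) (sub_nonneg.2 hfar)]

theorem continuous_scaledHopfLax (hf : ∀ x, |f x| ≤ B) (ht : 0 ≤ t) :
    Continuous (scaledHopfLax f t) :=
  (lipschitzWith_scaledHopfLax hf ht).continuous

theorem localSlope_exp_scaledHopfLax_le {X : Type*} [MetricSpace X] {f : X → ℝ} {B s t a : ℝ}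
    (hf : ∀ x, |f x| ≤ B) (ht : 0 ≤ t) (hts : t < s) (ha : 0 ≤ a) (x : X) :
    localSlope (fun y => Real.exp (a * scaledHopfLax f t y)) x ≤
      Real.exp (a * scaledHopfLax f t x) *
        (a * (2 * √((s * scaledHopfLax f t x - t * scaledHopfLax f s x) / (s - t)))) := by
  have hP := continuous_scaledHopfLax hf ht
  have hPs := continuous_scaledHopfLax hf (ht.trans hts.le)
  set D : X → ℝ := fun y => (s * scaledHopfLax f t y - t * scaledHopfLax f s y) / (s - t)
  have : Continuous D := by fun_prop
  have hle := localSlope_exp_comp_le (g := fun y => a * scaledHopfLax f t y) (x := x)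
    (w := fun y => a * (2 * √(max (D y) (D x)) + dist y x)) (by fun_prop) (by fun_prop)
    (by positivity) fun y => ?_
  · simpa only [max_self, dist_self, add_zero] using hle
  · rw [← mul_sub, abs_mul, abs_of_nonneg ha, mul_assoc]
    gcongr
    have hyx := scaledHopfLax_le_add_mul_dist hf ht hts y x
    have hxy := scaledHopfLax_le_add_mul_dist hf ht hts x y
    rw [dist_comm x y] at hxy
    rw [abs_sub_le_iff, sub_le_iff_le_add', sub_le_iff_le_add']
    refine ⟨hyx.trans ?_, hxy.trans ?_⟩ <;> gcongr
    exacts [le_max_right _ _, le_max_left _ _]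

theorem sq_localSlope_exp_scaledHopfLax_le {X : Type*} [MetricSpace X] {f : X → ℝ} {B s t a : ℝ}
    (hf : ∀ x, |f x| ≤ B) (ht : 0 ≤ t) (hts : t < s) (ha : 0 ≤ a) (x : X) :
    localSlope (fun y => Real.exp (a * scaledHopfLax f t y / 2)) x ^ 2 ≤
      a ^ 2 * ((s * (scaledHopfLax f t x * Real.exp (a * scaledHopfLax f t x)) -
        t * (scaledHopfLax f s x * Real.exp (a * scaledHopfLax f t x))) / (s - t)) := by
  have hD := div_nonneg (sub_nonneg.2 (mul_scaledHopfLax_le hf ht hts.le x)) (sub_pos.2 hts).le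
  have hexp : Real.exp (a / 2 * scaledHopfLax f t x) ^ 2 = Real.exp (a * scaledHopfLax f t x) := by
    rw [sq, ← Real.exp_add]
    ring_nf
  have hle := pow_le_pow_left₀ (localSlope_nonneg _ x)
    (localSlope_exp_scaledHopfLax_le hf ht hts (by positivity : 0 ≤ a / 2) x) 2
  rw [mul_pow, mul_pow, mul_pow, hexp, Real.sq_sqrt hD] at hle
  simp only [div_mul_eq_mul_div _ (2 : ℝ)] at hle
  refine hle.trans_eq ?_
  ring

end HopfLax

section LogSobolev

/-- The logarithmic Sobolev inequality `Ent_μ(f²) ≤ C ∫ |∇f|² dμ`, required only of bounded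
Lipschitz functions, for which all the integrals converge. -/
def LogSobolev {X : Type*} [MetricSpace X] [MeasurableSpace X] (C : ℝ) (μ : Measure X) : Prop :=
  ∀ f : X → ℝ, (∃ L : ℝ≥0, LipschitzWith L f) → (∃ B, ∀ x, |f x| ≤ B) →
    ∫ x, f x ^ 2 * Real.log (f x ^ 2) ∂μ - (∫ x, f x ^ 2 ∂μ) * Real.log (∫ x, f x ^ 2 ∂μ) ≤
      C * ∫ x, localSlope f x ^ 2 ∂μ

variable {X : Type*} [MetricSpace X] [MeasurableSpace X] {μ : Measure X} {f : X → ℝ}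
  {B C s t : ℝ}

theorem LogSobolev.entropy_exp_le (hμ : LogSobolev C μ) {g : X → ℝ} {b : ℝ} {L : ℝ≥0}
    (hb : ∀ x, |g x| ≤ b) (hg : LipschitzWith L g) :
    ∫ x, Real.exp (g x) * g x ∂μ - (∫ x, Real.exp (g x) ∂μ) * Real.log (∫ x, Real.exp (g x) ∂μ) ≤
      C * ∫ x, localSlope (fun y => Real.exp (g y / 2)) x ^ 2 ∂μ := by
  have hhalf (x : X) : |g x / 2| ≤ b / 2 := by
    rw [abs_div, abs_two]
    linarith [hb x]
  have hlip : LipschitzWith L fun x => g x / 2 := LipschitzWith.of_dist_le_mul fun x y => by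
    have := hg.dist_le_mul x y
    rw [Real.dist_eq] at this ⊢
    rw [← sub_div, abs_div, abs_two]
    linarith [abs_nonneg (g x - g y)]
  have hbound (x : X) : |Real.exp (g x / 2)| ≤ Real.exp (b / 2) := by
    rw [Real.abs_exp]
    exact Real.exp_le_exp.2 ((le_abs_self _).trans (hhalf x))
  have hsq (x : X) : Real.exp (g x / 2) ^ 2 = Real.exp (g x) := by
    rw [sq, ← Real.exp_add, add_halves]
  simpa only [hsq, Real.log_exp] using hμ (fun x => Real.exp (g x / 2))
    ⟨_, lipschitzWith_exp_comp (fun x => (le_abs_self _).trans (hhalf x)) hlip⟩ ⟨_, hbound⟩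

variable [OpensMeasurableSpace X]

theorem integrable_exp_mul_scaledHopfLax [IsFiniteMeasure μ] (hf : ∀ x, |f x| ≤ B) (ht : 0 ≤ t)
    (a : ℝ) : Integrable (fun x => Real.exp (a * scaledHopfLax f t x)) μ :=
  integrable_exp_mul_of_mem_Icc (continuous_scaledHopfLax hf ht).measurable.aemeasurable
    (ae_of_all _ fun x => abs_le.1 (abs_scaledHopfLax_le hf t x))

theorem integrable_scaledHopfLax_mul_exp [IsFiniteMeasure μ] (hf : ∀ x, |f x| ≤ B) (hs : 0 ≤ s)
    (ht : 0 ≤ t) (a : ℝ) :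
    Integrable (fun x => scaledHopfLax f s x * Real.exp (a * scaledHopfLax f t x)) μ :=
  (integrable_exp_mul_scaledHopfLax hf ht a).bdd_mul
    (continuous_scaledHopfLax hf hs).measurable.aestronglyMeasurable
    (ae_of_all _ fun x => abs_scaledHopfLax_le hf s x)

theorem mgf_scaledHopfLax_pos [IsProbabilityMeasure μ] (hf : ∀ x, |f x| ≤ B) (ht : 0 ≤ t) (a : ℝ) :
    0 < mgf (scaledHopfLax f t) μ a :=
  mgf_pos (integrable_exp_mul_scaledHopfLax hf ht a)

theorem LogSobolev.entropy_exp_scaledHopfLax_le [IsFiniteMeasure μ] (hμ : LogSobolev C μ)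
    (hC : 0 < C) (hf : ∀ x, |f x| ≤ B) (ht : 0 ≤ t) (hts : t < s) :
    C⁻¹ * ∫ x, scaledHopfLax f t x * Real.exp (C⁻¹ * scaledHopfLax f t x) ∂μ -
        mgf (scaledHopfLax f t) μ C⁻¹ * cgf (scaledHopfLax f t) μ C⁻¹ ≤
      C⁻¹ * ((s * ∫ x, scaledHopfLax f t x * Real.exp (C⁻¹ * scaledHopfLax f t x) ∂μ -
        t * ∫ x, scaledHopfLax f s x * Real.exp (C⁻¹ * scaledHopfLax f t x) ∂μ) / (s - t)) := by
  set P := scaledHopfLax f t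
  have hC' : 0 < C⁻¹ := inv_pos.2 hC
  have hbdd (x : X) : |C⁻¹ * P x| ≤ C⁻¹ * (B * |t|) := by
    rw [abs_mul, abs_of_pos hC']
    exact mul_le_mul_of_nonneg_left (abs_scaledHopfLax_le hf t x) hC'.le
  have hlip := (lipschitzWith_smul C⁻¹).comp (lipschitzWith_scaledHopfLax hf ht)
  have hint := (integrable_scaledHopfLax_mul_exp (μ := μ) hf ht ht C⁻¹).const_mul s
  have hint' := (integrable_scaledHopfLax_mul_exp (μ := μ) hf (ht.trans hts.le) ht C⁻¹).const_mul t
  have hslope := integral_mono_of_nonneg (ae_of_all μ fun x => sq_nonneg _)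
    (((hint.sub hint').div_const (s - t)).const_mul (C⁻¹ ^ 2))
    (ae_of_all μ fun x => sq_localSlope_exp_scaledHopfLax_le hf ht hts hC'.le x)
  simp only [Pi.sub_apply] at hslope
  rw [integral_const_mul, integral_div, integral_sub hint hint', integral_const_mul,
    integral_const_mul] at hslope
  calc _ = ∫ x, Real.exp (C⁻¹ * P x) * (C⁻¹ * P x) ∂μ -
        (∫ x, Real.exp (C⁻¹ * P x) ∂μ) * Real.log (∫ x, Real.exp (C⁻¹ * P x) ∂μ) := by
        rw [← integral_const_mul]
        congr 2 with x
        ring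
    _ ≤ _ := (hμ.entropy_exp_le hbdd hlip).trans (mul_le_mul_of_nonneg_left hslope hC.le)
    _ = _ := by
        rw [← mul_assoc]
        congr 1
        field_simp

theorem LogSobolev.mul_integral_sub_mul_exp_le [IsFiniteMeasure μ] (hμ : LogSobolev C μ)
    (hC : 0 < C) (hf : ∀ x, |f x| ≤ B) (ht : 0 ≤ t) (hts : t < s) :
    t * ∫ x, C⁻¹ * (scaledHopfLax f s x - scaledHopfLax f t x) *
        Real.exp (C⁻¹ * scaledHopfLax f t x) ∂μ ≤
      (s - t) * (mgf (scaledHopfLax f t) μ C⁻¹ * cgf (scaledHopfLax f t) μ C⁻¹) := by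
  have hst : 0 < s - t := sub_pos.2 hts
  have hent := mul_le_mul_of_nonneg_left (hμ.entropy_exp_scaledHopfLax_le hC hf ht hts) hst.le
  rw [mul_left_comm (s - t) C⁻¹, mul_div_cancel₀ _ hst.ne'] at hent
  simp only [mul_assoc, sub_mul]
  rw [integral_const_mul, integral_sub (integrable_scaledHopfLax_mul_exp hf (ht.trans hts.le) ht _)
    (integrable_scaledHopfLax_mul_exp hf ht ht _)]
  linarith

theorem mgf_scaledHopfLax_le [IsFiniteMeasure μ] (hf : ∀ x, |f x| ≤ B) {a : ℝ} (ha : 0 ≤ a)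
    (ht : 0 ≤ t) (hts : t ≤ s) (hst : a * (B * (s - t)) ≤ 1) :
    mgf (scaledHopfLax f s) μ a ≤ (1 + (a * (B * (s - t))) ^ 2) * mgf (scaledHopfLax f t) μ a +
      ∫ x, a * (scaledHopfLax f s x - scaledHopfLax f t x) *
        Real.exp (a * scaledHopfLax f t x) ∂μ := by
  set P := scaledHopfLax f t
  set δ : X → ℝ := fun x => a * (scaledHopfLax f s x - P x) with hδ
  have hδ_le (x : X) : |δ x| ≤ a * (B * (s - t)) := by
    rw [hδ, abs_mul, abs_of_nonneg ha, ← abs_of_nonneg (sub_nonneg.2 hts)]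
    exact mul_le_mul_of_nonneg_left (abs_scaledHopfLax_sub_le hf s t x) ha
  have hexp := (integrable_exp_mul_scaledHopfLax (μ := μ) hf ht a).const_mul
    (1 + (a * (B * (s - t))) ^ 2)
  have hδ_int : Integrable (fun x => δ x * Real.exp (a * P x)) μ := by
    simpa only [hδ, mul_assoc, sub_mul, Pi.sub_apply] using
      ((integrable_scaledHopfLax_mul_exp hf (ht.trans hts) ht _).sub
        (integrable_scaledHopfLax_mul_exp hf ht ht _)).const_mul a
  rw [mgf, mgf, ← integral_const_mul, ← integral_add hexp hδ_int]
  refine integral_mono (integrable_exp_mul_scaledHopfLax hf (ht.trans hts) _) (hexp.add hδ_int)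
    fun x => ?_
  have htaylor := (abs_le.1 (Real.abs_exp_sub_one_sub_id_le ((hδ_le x).trans hst))).2
  have hsq := sq_le_sq' (abs_le.1 (hδ_le x)).1 (abs_le.1 (hδ_le x)).2
  calc Real.exp (a * scaledHopfLax f s x) = Real.exp (δ x) * Real.exp (a * P x) := by
        rw [← Real.exp_add]
        simp only [hδ]
        ring_nf
    _ ≤ (1 + (a * (B * (s - t))) ^ 2 + δ x) * Real.exp (a * P x) := by gcongr; linarith
    _ = _ := add_mul _ _ _

theorem LogSobolev.cgf_scaledHopfLax_le [IsProbabilityMeasure μ] (hμ : LogSobolev C μ)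
    (hC : 0 < C) (hf : ∀ x, |f x| ≤ B) (ht : 0 < t) (hts : t < s) (hst : C⁻¹ * (B * (s - t)) ≤ 1) :
    cgf (scaledHopfLax f s) μ C⁻¹ ≤
      s / t * cgf (scaledHopfLax f t) μ C⁻¹ + (C⁻¹ * (B * (s - t))) ^ 2 := by
  have hZt := mgf_scaledHopfLax_pos (μ := μ) hf ht.le C⁻¹
  have hZs := mgf_scaledHopfLax_pos (μ := μ) hf (ht.trans hts).le C⁻¹
  have hdiff := (le_div_iff₀' ht).2 (hμ.mul_integral_sub_mul_exp_le hC hf ht.le hts)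
  have hZ := (mgf_scaledHopfLax_le hf (inv_pos.2 hC).le ht.le hts.le hst).trans
    (add_le_add_right hdiff _)
  have hratio : mgf (scaledHopfLax f s) μ C⁻¹ / mgf (scaledHopfLax f t) μ C⁻¹ ≤
      1 + (C⁻¹ * (B * (s - t))) ^ 2 + (s - t) / t * cgf (scaledHopfLax f t) μ C⁻¹ := by
    rw [div_le_iff₀ hZt]
    refine hZ.trans_eq ?_
    ring
  have hlog := Real.log_le_sub_one_of_pos (div_pos hZs hZt)
  rw [Real.log_div hZs.ne' hZt.ne'] at hlog
  change Real.log _ ≤ _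
  have hst' : s / t * cgf (scaledHopfLax f t) μ C⁻¹ = Real.log (mgf (scaledHopfLax f t) μ C⁻¹) +
      (s - t) / t * cgf (scaledHopfLax f t) μ C⁻¹ := by
    rw [sub_div, div_self ht.ne', sub_mul, one_mul, cgf, add_sub_cancel]
  linarith

theorem continuousOn_cgf_scaledHopfLax [IsProbabilityMeasure μ] (hf : ∀ x, |f x| ≤ B) (a b : ℝ) :
    ContinuousOn (fun t => cgf (scaledHopfLax f t) μ a) (Icc 0 b) := by
  refine ContinuousOn.log ?_ fun t ht => (mgf_scaledHopfLax_pos hf ht.1 a).ne'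
  refine continuousOn_of_dominated (bound := fun _ => Real.exp (|a| * (B * b)))
    (fun t ht => (integrable_exp_mul_scaledHopfLax hf ht.1 a).aestronglyMeasurable)
    (fun t ht => ae_of_all _ fun x => ?_) (integrable_const _) (ae_of_all _ fun x => ?_)
  · have hB : 0 ≤ B := (abs_nonneg _).trans (hf x)
    rw [Real.norm_eq_abs, Real.abs_exp, Real.exp_le_exp]
    refine (le_abs_self _).trans ((abs_mul _ _).trans_le ?_)
    gcongr
    refine (abs_scaledHopfLax_le hf t x).trans ?_
    rw [abs_of_nonneg ht.1]
    gcongr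
    exact ht.2
  · have hlip : LipschitzWith (Real.toNNReal B) fun t => scaledHopfLax f t x :=
      LipschitzWith.of_dist_le' fun s t => abs_scaledHopfLax_sub_le hf s t x
    have := hlip.continuous
    fun_prop

theorem LogSobolev.slope_cgf_scaledHopfLax_div_le [IsProbabilityMeasure μ] (hμ : LogSobolev C μ)
    (hC : 0 < C) (hf : ∀ x, |f x| ≤ B) (ht : 0 < t) (hts : t < s) (hst : C⁻¹ * (B * (s - t)) ≤ 1) :
    slope (fun t => cgf (scaledHopfLax f t) μ C⁻¹ / t) t s ≤ (C⁻¹ * B) ^ 2 * (s - t) / s := by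
  have hs := ht.trans hts
  have hst₀ := sub_pos.2 hts
  rw [slope_def_field, div_le_div_iff₀ hst₀ hs, sub_mul, div_mul_cancel₀ _ hs.ne',
    sub_le_iff_le_add']
  refine (hμ.cgf_scaledHopfLax_le hC hf ht hts hst).trans_eq ?_
  ring

theorem LogSobolev.antitoneOn_cgf_scaledHopfLax_div [IsProbabilityMeasure μ]
    (hμ : LogSobolev C μ) (hC : 0 < C) (hf : ∀ x, |f x| ≤ B) :
    AntitoneOn (fun t => cgf (scaledHopfLax f t) μ C⁻¹ / t) (Ioi 0) := by
  intro u hu v _ huv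
  refine image_le_of_liminf_slope_right_le_deriv_boundary
    (B := fun _ => cgf (scaledHopfLax f u) μ C⁻¹ / u) (B' := fun _ => 0)
    (((continuousOn_cgf_scaledHopfLax hf C⁻¹ v).mono (Icc_subset_Icc_left hu.le)).div
      continuousOn_id fun t ht => (hu.trans_le ht.1).ne') le_rfl continuousOn_const
      (fun t _ => hasDerivWithinAt_const t _ _) (fun t ht r hr => ?_)
    (right_mem_Icc.2 huv)
  have ht₀ : 0 < t := hu.trans_le ht.1
  have hsmall : Tendsto (fun s => C⁻¹ * (B * (s - t))) (𝓝[>] t) (𝓝 0) :=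
    tendsto_nhdsWithin_of_tendsto_nhds (Continuous.tendsto' (by fun_prop) _ _ (by simp))
  have hbound : Tendsto (fun s => (C⁻¹ * B) ^ 2 * (s - t) / s) (𝓝[>] t) (𝓝 0) := by
    have : ContinuousAt (fun s => (C⁻¹ * B) ^ 2 * (s - t) / s) t := by
      fun_prop (disch := positivity)
    simpa using tendsto_nhdsWithin_of_tendsto_nhds this.tendsto
  refine Eventually.frequently ?_
  filter_upwards [self_mem_nhdsWithin, hsmall.eventually_le_const zero_lt_one,
    hbound.eventually_lt_const hr] with s hts hst hslope
  exact (hμ.slope_cgf_scaledHopfLax_div_le hC hf ht₀ hts hst).trans_lt hslope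

/-- The dual form of the transport inequality, due to Bobkov, Gentil and Ledoux. -/
theorem LogSobolev.cgf_scaledHopfLax_one_le [IsProbabilityMeasure μ]
    (hμ : LogSobolev C μ) (hC : 0 < C) (hf : ∀ x, |f x| ≤ B) (hfm : AEMeasurable f μ) :
    cgf (scaledHopfLax f 1) μ C⁻¹ ≤ C⁻¹ * ∫ x, f x ∂μ := by
  have hset : integrableExpSet f μ = univ := eq_univ_of_forall fun a =>
    integrable_exp_mul_of_mem_Icc hfm (ae_of_all _ fun x => abs_le.1 (hf x))
  have hzero : 0 ∈ interior (integrableExpSet f μ) := by simp [hset]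
  have hderiv : HasDerivAt (cgf f μ) (∫ x, f x ∂μ) 0 := by
    have h := (analyticAt_cgf hzero).differentiableAt.hasDerivAt
    rwa [deriv_cgf_zero hzero, probReal_univ, div_one] at h
  have hlim := (HasDerivAt.scomp (0 : ℝ) (h := fun t => t * C⁻¹) (by simpa using hderiv)
    (hasDerivAt_mul_const C⁻¹)).tendsto_slope_zero_right
  refine ge_of_tendsto hlim ?_
  filter_upwards [Ioc_mem_nhdsGT zero_lt_one] with t ht
  have hanti := hμ.antitoneOn_cgf_scaledHopfLax_div hC hf ht.1 (mem_Ioi.2 zero_lt_one) ht.2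
  have hle : mgf (scaledHopfLax f t) μ C⁻¹ ≤ mgf f μ (t * C⁻¹) := by
    refine integral_mono (integrable_exp_mul_scaledHopfLax hf ht.1.le _)
      (integrable_exp_mul_of_mem_Icc hfm (ae_of_all _ fun x => abs_le.1 (hf x))) fun x => ?_
    simp only [Real.exp_le_exp]
    rw [mul_comm t, mul_assoc]
    exact mul_le_mul_of_nonneg_left (scaledHopfLax_le_mul_self hf t x) (inv_pos.2 hC).le
  have hlog := Real.log_le_log (mgf_scaledHopfLax_pos hf ht.1.le _) hle
  simp only [div_one] at hanti
  refine hanti.trans ?_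
  simpa [cgf, div_eq_inv_mul] using mul_le_mul_of_nonneg_left hlog (inv_pos.2 ht.1).le

end LogSobolev

section Entropy

variable {X : Type*} [MeasurableSpace X] {μ ν : Measure X}

theorem relEntropy_eq_klDiv (ν μ : Measure X) [IsFiniteMeasure ν] [IsFiniteMeasure μ] :
    relEntropy ν μ = klDiv ν μ := by
  rw [relEntropy, klDiv_eq_lintegral_klFun]
  simp only [klFun_apply, sub_add_eq_add_sub]

/-- The Donsker–Varadhan inequality is the nonnegativity of the entropy relative to the tilted
measure. -/
theorem integral_le_toReal_klDiv_add_log_integral_exp [IsProbabilityMeasure ν]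
    [IsProbabilityMeasure μ] (hνμ : klDiv ν μ ≠ ∞) {φ : X → ℝ} (hφ : Integrable φ ν)
    (hexp : Integrable (fun x => Real.exp (φ x)) μ) :
    ∫ x, φ x ∂ν ≤ (klDiv ν μ).toReal + Real.log (∫ x, Real.exp (φ x) ∂μ) := by
  obtain ⟨hac, hllr⟩ := klDiv_ne_top_iff.1 hνμ
  have := isProbabilityMeasure_tilted hexp
  have hnonneg : 0 ≤ (klDiv ν (μ.tilted φ)).toReal := ENNReal.toReal_nonneg
  rw [toReal_klDiv_of_measure_eq (hac.trans (absolutelyContinuous_tilted hexp)) (by simp),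
    integral_llr_tilted_right hac hφ hexp hllr] at hnonneg
  rw [toReal_klDiv_of_measure_eq hac (by simp)]
  linarith

theorem klDiv_cond_ne_top [IsFiniteMeasure μ] {s : Set X} (hs : MeasurableSet s) :
    klDiv (μ[|s]) μ ≠ ∞ := by
  refine klDiv_ne_top_iff.2 ⟨cond_absolutelyContinuous, ?_⟩
  have hdens : μ[|s] = μ.withDensity (s.indicator fun _ => (μ s)⁻¹) := by
    rw [withDensity_indicator hs, withDensity_const, ProbabilityTheory.cond]
  have hderiv := Measure.rnDeriv_withDensity μ
    (measurable_const.indicator hs : Measurable (s.indicator fun _ => (μ s)⁻¹))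
  rw [← hdens] at hderiv
  refine (integrable_const (Real.log (μ s)⁻¹.toReal)).congr ?_
  filter_upwards [cond_absolutelyContinuous.ae_eq hderiv, ae_cond_mem hs] with x hx hxs
  rw [llr, hx, indicator_of_mem hxs]

end Entropy

section FiniteDuality

/-- The cone of functions that dominate a nonnegative multiple of `d`. -/
def dominatingCone {α : Type*} (d : α → ℝ) : PointedCone ℝ (α → ℝ) where
  carrier := {φ | ∃ r : ℝ, 0 ≤ r ∧ ∀ z, r * d z ≤ φ z}
  zero_mem' := ⟨0, le_rfl, fun z => by simp⟩
  add_mem' := by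
    rintro φ ψ ⟨r, hr, hφ⟩ ⟨q, hq, hψ⟩
    refine ⟨r + q, add_nonneg hr hq, fun z => ?_⟩
    rw [add_mul]
    exact add_le_add (hφ z) (hψ z)
  smul_mem' := by
    rintro ⟨k, hk⟩ φ ⟨r, hr, hφ⟩
    refine ⟨k * r, mul_nonneg hk hr, fun z => ?_⟩
    rw [mul_assoc]
    exact mul_le_mul_of_nonneg_left (hφ z) hk

/-- The functions of the form `u ⊕ v : (i, j) ↦ u i + v j`. -/
def tensorSums (ι κ : Type*) : Submodule ℝ (ι × κ → ℝ) :=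
  LinearMap.range ((LinearMap.funLeft ℝ ℝ (Prod.fst : ι × κ → ι)).coprod
    (LinearMap.funLeft ℝ ℝ (Prod.snd : ι × κ → κ)))

theorem mem_tensorSums {ι κ : Type*} (u : ι → ℝ) (v : κ → ℝ) :
    (fun z : ι × κ => u z.1 + v z.2) ∈ tensorSums ι κ :=
  ⟨(u, v), rfl⟩

variable {ι κ : Type*} [Fintype ι] [Fintype κ] {a : ι → ℝ} {b : κ → ℝ}

theorem sum_mul_mul_add (ha : ∑ i, a i = 1) (hb : ∑ j, b j = 1) (u : ι → ℝ) (v : κ → ℝ) :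
    ∑ z : ι × κ, (u z.1 + v z.2) * (a z.1 * b z.2) = ∑ i, a i * u i + ∑ j, b j * v j := by
  simp only [Fintype.sum_prod_type, add_mul, Finset.sum_add_distrib]
  congr 1
  · exact Finset.sum_congr rfl fun i _ => by
      rw [← Finset.mul_sum, ← Finset.mul_sum, hb, mul_one, mul_comm]
  · simp only [mul_left_comm, ← Finset.mul_sum, ← Finset.sum_mul, ha, one_mul]
    exact Finset.sum_congr rfl fun j _ => mul_comm _ _

/-- The M. Riesz extension theorem, applied to the functional `u ⊕ v ↦ ∑ a u + ∑ b v`. -/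
theorem exists_linearMap_extending_marginals (ha₀ : ∀ i, 0 ≤ a i) (hb₀ : ∀ j, 0 ≤ b j)
    (ha : ∑ i, a i = 1) (hb : ∑ j, b j = 1) {c : ι × κ → ℝ} {T : ℝ}
    (h : ∀ (u : ι → ℝ) (v : κ → ℝ), (∀ i j, u i + v j ≤ c (i, j)) →
      ∑ i, a i * u i + ∑ j, b j * v j ≤ T) :
    ∃ g : (ι × κ → ℝ) →ₗ[ℝ] ℝ,
      (∀ (u : ι → ℝ) (v : κ → ℝ), g (fun z => u z.1 + v z.2) = ∑ i, a i * u i + ∑ j, b j * v j) ∧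
      ∀ φ ∈ dominatingCone fun z => T - c z, 0 ≤ g φ := by
  set f : (ι × κ → ℝ) →ₗ.[ℝ] ℝ :=
    (Fintype.linearCombination ℝ fun z : ι × κ => a z.1 * b z.2).toPMap (tensorSums ι κ)
  have hf (u : ι → ℝ) (v : κ → ℝ) :
      f ⟨_, mem_tensorSums u v⟩ = ∑ i, a i * u i + ∑ j, b j * v j :=
    sum_mul_mul_add ha hb u v
  have hnonneg (φ : f.domain) (hφ : (φ : ι × κ → ℝ) ∈ dominatingCone fun z => T - c z) :
      0 ≤ f φ := by
    obtain ⟨_, ⟨u, v⟩, rfl⟩ := φ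
    obtain ⟨r, hr, hdom⟩ := hφ
    refine le_of_le_of_eq ?_ (hf u v).symm
    rcases hr.eq_or_lt with rfl | hr
    · rw [← sum_mul_mul_add ha hb]
      refine Finset.sum_nonneg fun z _ => mul_nonneg ?_ (mul_nonneg (ha₀ _) (hb₀ _))
      simpa using hdom z
    · have hle := h (fun i => T - u i / r) (fun j => -(v j / r)) fun i j => by
        have : r * (T - c (i, j)) ≤ u i + v j := hdom (i, j)
        have := (le_div_iff₀' hr).2 this
        rw [add_div] at this
        linarith
      simp only [mul_sub, mul_neg, Finset.sum_sub_distrib, Finset.sum_neg_distrib,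
        ← Finset.sum_mul, ha, one_mul, mul_div_assoc', ← Finset.sum_div] at hle
      have : 0 ≤ (∑ i, a i * u i + ∑ j, b j * v j) / r := by
        rw [add_div]
        linarith
      simpa [hr] using (le_div_iff₀ hr).1 this
  have hdense (φ : ι × κ → ℝ) :
      ∃ ψ : f.domain, (ψ : ι × κ → ℝ) + φ ∈ dominatingCone fun z => T - c z := by
    obtain ⟨M, hM⟩ := (finite_range φ).bddBelow
    refine ⟨⟨_, mem_tensorSums (fun _ => -M) 0⟩, 0, le_rfl, fun z => ?_⟩
    simpa using hM (mem_range_self z)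
  obtain ⟨g, hgf, hg⟩ := riesz_extension _ f hnonneg hdense
  exact ⟨g, fun u v => (hgf ⟨_, mem_tensorSums u v⟩).trans (hf u v), hg⟩

theorem exists_coupling_sum_le (ha₀ : ∀ i, 0 ≤ a i) (hb₀ : ∀ j, 0 ≤ b j)
    (ha : ∑ i, a i = 1) (hb : ∑ j, b j = 1) {c : ι × κ → ℝ} {T : ℝ}
    (h : ∀ (u : ι → ℝ) (v : κ → ℝ), (∀ i j, u i + v j ≤ c (i, j)) →
      ∑ i, a i * u i + ∑ j, b j * v j ≤ T) :
    ∃ p : ι × κ → ℝ, (∀ z, 0 ≤ p z) ∧ (∀ i, ∑ j, p (i, j) = a i) ∧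
      (∀ j, ∑ i, p (i, j) = b j) ∧ ∑ z, p z * c z ≤ T := by
  classical
  obtain ⟨g, hmarg, hpos⟩ := exists_linearMap_extending_marginals ha₀ hb₀ ha hb h
  have hg (φ : ι × κ → ℝ) : g φ = ∑ z, g (Pi.single z 1) * φ z := by
    rw [LinearMap.pi_apply_eq_sum_univ g φ]
    refine Finset.sum_congr rfl fun z _ => ?_
    rw [smul_eq_mul, mul_comm]
    congr 2 with w
    simp [Pi.single_apply, eq_comm]
  refine ⟨fun z => g (Pi.single z 1), fun z => ?_, fun i => ?_, fun j => ?_, ?_⟩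
  · refine hpos _ ⟨0, le_rfl, fun w => ?_⟩
    simpa using (Pi.single_nonneg.2 zero_le_one : (0 : ι × κ → ℝ) ≤ Pi.single z 1) w
  · have hi := hmarg (Pi.single i 1) 0
    rw [hg] at hi
    simpa [Fintype.sum_prod_type_right, Pi.single_apply] using hi
  · have hj := hmarg 0 (Pi.single j 1)
    rw [hg] at hj
    simpa [Fintype.sum_prod_type, Pi.single_apply] using hj
  · have hTc := hpos (fun z => T - c z) ⟨1, zero_le_one, fun z => (one_mul _).le⟩
    have hT : g (fun _ => T) = T := by simpa [← Finset.sum_mul, ha] using hmarg (fun _ => T) 0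
    change 0 ≤ g ((fun _ => T) - c) at hTc
    rwa [map_sub, hT, hg c, sub_nonneg] at hTc

end FiniteDuality

section OptCost

variable {X : Type*} [MeasurableSpace X] {ν μ : Measure X}

theorem optCost_le_lintegral (c : X → X → ℝ) {π : Measure (X × X)} (hfst : π.map Prod.fst = ν)
    (hsnd : π.map Prod.snd = μ) : optCost c ν μ ≤ ∫⁻ z, ENNReal.ofReal (c z.1 z.2) ∂π :=
  iInf₂_le π ⟨hfst, hsnd⟩

theorem lintegral_marginals_add {π : Measure (X × X)} (hfst : π.map Prod.fst = ν)
    (hsnd : π.map Prod.snd = μ) {φ ψ : X → ℝ≥0∞} (hφ : Measurable φ) (hψ : Measurable ψ) :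
    ∫⁻ z, (φ z.1 + ψ z.2) ∂π = ∫⁻ x, φ x ∂ν + ∫⁻ y, ψ y ∂μ := by
  rw [← hfst, ← hsnd, lintegral_map hφ measurable_fst, lintegral_map hψ measurable_snd]
  exact lintegral_add_left (hφ.comp measurable_fst) _

theorem optCost_le_optCost_add {c c' : X → X → ℝ} {φ ψ : X → ℝ≥0∞} (hφ : Measurable φ)
    (hψ : Measurable ψ)
    (h : ∀ x y, ENNReal.ofReal (c x y) ≤ ENNReal.ofReal (c' x y) + (φ x + ψ y)) :
    optCost c ν μ ≤ optCost c' ν μ + (∫⁻ x, φ x ∂ν + ∫⁻ y, ψ y ∂μ) := by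
  simp only [optCost, ENNReal.iInf_add]
  refine le_iInf₂ fun π ⟨hfst, hsnd⟩ => (optCost_le_lintegral c hfst hsnd).trans ?_
  rw [← lintegral_marginals_add hfst hsnd hφ hψ]
  exact (lintegral_mono fun z : X × X => h z.1 z.2).trans_eq
    (lintegral_add_right _ ((hφ.comp measurable_fst).add (hψ.comp measurable_snd)))

theorem lintegral_le_lintegral_add_optCost {c : X → X → ℝ} {φ ψ : X → ℝ≥0∞} (hφ : Measurable φ)
    (hψ : Measurable ψ) (h : ∀ x y, ψ y ≤ φ x + ENNReal.ofReal (c x y)) :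
    ∫⁻ y, ψ y ∂μ ≤ ∫⁻ x, φ x ∂ν + optCost c ν μ := by
  simp only [optCost, ENNReal.add_iInf]
  refine le_iInf₂ fun π ⟨hfst, hsnd⟩ => ?_
  rw [← hsnd, ← hfst, lintegral_map hψ measurable_snd, lintegral_map hφ measurable_fst]
  exact (lintegral_mono fun z : X × X => h z.1 z.2).trans_eq
    (lintegral_add_left (hφ.comp measurable_fst) _)

theorem optCost_swap_le (c : X → X → ℝ) (ν μ : Measure X) :
    optCost (fun x y => c y x) μ ν ≤ optCost c ν μ := by
  refine le_iInf₂ fun π ⟨hfst, hsnd⟩ => ?_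
  refine (optCost_le_lintegral (π := π.map Prod.swap) _ ?_ ?_).trans ?_
  · rwa [Measure.map_map measurable_fst measurable_swap]
  · rwa [Measure.map_map measurable_snd measurable_swap]
  · exact (lintegral_map_equiv _ MeasurableEquiv.prodComm).le

end OptCost

section Gluing

variable {X Y ι κ : Type*} [MeasurableSpace X] [MeasurableSpace Y]

/-- The measure on `X × Y` that charges the cell `S ⁻¹' {i} ×ˢ R ⁻¹' {j}` with the weight
`p (i, j)`, and is a product of conditional measures within each cell. -/
noncomputable def cellwiseProd [Fintype ι] [Fintype κ] (p : ι × κ → ℝ≥0∞) (ν : Measure X)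
    (μ : Measure Y) (S : X → ι) (R : Y → κ) : Measure (X × Y) :=
  ∑ z : ι × κ, p z • (ν[|S ⁻¹' {z.1}]).prod (μ[|R ⁻¹' {z.2}])

variable {p : ι × κ → ℝ≥0∞} {ν : Measure X} {μ : Measure Y} {S : X → ι} {R : Y → κ}

theorem weight_mul_cond_univ [Fintype κ] [IsFiniteMeasure ν] {w : κ → ℝ≥0∞} {i : ι}
    (h : ∑ j, w j = ν (S ⁻¹' {i})) (j : κ) : w j * ν[|S ⁻¹' {i}] univ = w j := by
  by_cases hi : ν (S ⁻¹' {i}) = 0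
  · rw [hi, Finset.sum_eq_zero_iff] at h
    rw [h j (Finset.mem_univ j), zero_mul]
  · have := cond_isProbabilityMeasure hi
    rw [measure_univ, mul_one]

variable [Fintype ι] [Fintype κ]

theorem map_swap_cellwiseProd [IsFiniteMeasure ν] [IsFiniteMeasure μ] :
    (cellwiseProd p ν μ S R).map Prod.swap = cellwiseProd (p ∘ Prod.swap) μ ν R S := by
  rw [cellwiseProd, Measure.map_finset_sum measurable_swap.aemeasurable]
  simp only [Measure.map_smul, Measure.prod_swap]
  exact (Equiv.prodComm ι κ).sum_comp fun z : κ × ι =>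
    p z.swap • (μ[|R ⁻¹' {z.1}]).prod (ν[|S ⁻¹' {z.2}])

theorem map_fst_cellwiseProd [MeasurableSpace ι] [MeasurableSingletonClass ι] [IsFiniteMeasure ν]
    [IsFiniteMeasure μ] (hS : Measurable S) (hν : ∀ i, ∑ j, p (i, j) = ν (S ⁻¹' {i}))
    (hμ : ∀ j, ∑ i, p (i, j) = μ (R ⁻¹' {j})) :
    (cellwiseProd p ν μ S R).map Prod.fst = ν := by
  rw [cellwiseProd, Measure.map_finset_sum measurable_fst.aemeasurable, Fintype.sum_prod_type]
  conv_rhs => rw [← sum_meas_smul_cond_fiber hS ν]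
  refine Finset.sum_congr rfl fun i _ => ?_
  simp only [Measure.map_smul, Measure.map_fst_prod, smul_smul, weight_mul_cond_univ (hμ _)]
  rw [← Finset.sum_smul, hν]

theorem map_snd_cellwiseProd [MeasurableSpace κ] [MeasurableSingletonClass κ] [IsFiniteMeasure ν]
    [IsFiniteMeasure μ] (hR : Measurable R) (hν : ∀ i, ∑ j, p (i, j) = ν (S ⁻¹' {i}))
    (hμ : ∀ j, ∑ i, p (i, j) = μ (R ⁻¹' {j})) :
    (cellwiseProd p ν μ S R).map Prod.snd = μ := by
  have h := map_fst_cellwiseProd (p := p ∘ Prod.swap) hR hμ hν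
  rwa [← map_swap_cellwiseProd, Measure.map_map measurable_fst measurable_swap] at h

theorem lintegral_cellwiseProd_le [MeasurableSpace ι] [MeasurableSingletonClass ι]
    [MeasurableSpace κ] [MeasurableSingletonClass κ] (hS : Measurable S) (hR : Measurable R)
    (c : ι × κ → ℝ≥0∞) :
    ∫⁻ z, c (S z.1, R z.2) ∂cellwiseProd p ν μ S R ≤ ∑ z, p z * c z := by
  rw [cellwiseProd, lintegral_finsetSum_measure]
  refine Finset.sum_le_sum fun z _ => ?_
  rw [lintegral_smul_measure, smul_eq_mul]
  gcongr
  have hcell : ∀ᵐ w ∂(ν[|S ⁻¹' {z.1}]).prod (μ[|R ⁻¹' {z.2}]), c (S w.1, R w.2) = c z := by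
    filter_upwards [Measure.quasiMeasurePreserving_fst.ae
        (ae_cond_mem (hS (measurableSet_singleton z.1))),
      Measure.quasiMeasurePreserving_snd.ae (ae_cond_mem (hR (measurableSet_singleton z.2)))]
      with w hw₁ hw₂
    rw [show S w.1 = z.1 from hw₁, show R w.2 = z.2 from hw₂]
  rw [lintegral_congr_ae hcell, lintegral_const, ← univ_prod_univ, Measure.prod_prod]
  exact mul_le_of_le_one_right' (mul_le_one' prob_le_one prob_le_one)

end Gluing

section Kantorovich

theorem integral_comp_eq_sum {X ι : Type*} [MeasurableSpace X] [Fintype ι] [MeasurableSpace ι]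
    [MeasurableSingletonClass ι] (ν : Measure X) [IsFiniteMeasure ν] {S : X → ι}
    (hS : Measurable S) (u : ι → ℝ) : ∫ x, u (S x) ∂ν = ∑ i, ν.real (S ⁻¹' {i}) * u i := by
  rw [← integral_map hS.aemeasurable (measurable_of_finite u).aestronglyMeasurable,
    integral_fintype Integrable.of_finite]
  simp only [map_measureReal_apply hS (measurableSet_singleton _), smul_eq_mul]

/-- The Kantorovich dual value of the transport problem is at most `T`, potentials being bounded and
measurable. -/
def KantorovichDualLE {X : Type*} [MeasurableSpace X] (c : X → X → ℝ) (ν μ : Measure X)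
    (T : ℝ) : Prop :=
  ∀ u v : X → ℝ, Measurable u → Measurable v → (∃ B, ∀ x, |u x| ≤ B) → (∃ B, ∀ y, |v y| ≤ B) →
    (∀ x y, u x + v y ≤ c x y) → ∫ x, u x ∂ν + ∫ y, v y ∂μ ≤ T

theorem KantorovichDualLE.of_cost_le {X : Type*} [MeasurableSpace X] {c c' : X → X → ℝ}
    {ν μ : Measure X} {T : ℝ} (h : KantorovichDualLE c' ν μ T) (hcc' : ∀ x y, c x y ≤ c' x y) :
    KantorovichDualLE c ν μ T := fun u v hu hv hu' hv' huv =>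
  h u v hu hv hu' hv' fun x y => (huv x y).trans (hcc' x y)

section Discretization

variable {X ι : Type*} [MeasurableSpace X] [Finite ι] [MeasurableSpace ι]
  [MeasurableSingletonClass ι] {ν μ : Measure X} [IsProbabilityMeasure ν] [IsProbabilityMeasure μ]
  {S : X → ι} {c' : ι × ι → ℝ} {T : ℝ}

theorem optCost_comp_le (hS : Measurable S) (hc' : ∀ z, 0 ≤ c' z)
    (h : ∀ u v : ι → ℝ, (∀ i j, u i + v j ≤ c' (i, j)) →
      ∫ x, u (S x) ∂ν + ∫ y, v (S y) ∂μ ≤ T) :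
    optCost (fun x y => c' (S x, S y)) ν μ ≤ ENNReal.ofReal T := by
  cases nonempty_fintype ι
  have hsum (ρ : Measure X) [IsProbabilityMeasure ρ] : ∑ i, ρ.real (S ⁻¹' {i}) = 1 := by
    simpa using (integral_comp_eq_sum ρ hS fun _ => 1).symm
  simp only [integral_comp_eq_sum _ hS] at h
  obtain ⟨p, hp, hrow, hcol, hpc⟩ := exists_coupling_sum_le (fun _ => measureReal_nonneg)
    (fun _ => measureReal_nonneg) (hsum ν) (hsum μ) h
  have hrow' (i : ι) : ∑ j, ENNReal.ofReal (p (i, j)) = ν (S ⁻¹' {i}) := by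
    rw [← ENNReal.ofReal_sum_of_nonneg fun _ _ => hp _, hrow, ofReal_measureReal]
  have hcol' (j : ι) : ∑ i, ENNReal.ofReal (p (i, j)) = μ (S ⁻¹' {j}) := by
    rw [← ENNReal.ofReal_sum_of_nonneg fun _ _ => hp _, hcol, ofReal_measureReal]
  calc optCost (fun x y => c' (S x, S y)) ν μ
      ≤ ∫⁻ z, ENNReal.ofReal (c' (S z.1, S z.2))
          ∂cellwiseProd (fun z => ENNReal.ofReal (p z)) ν μ S S :=
        optCost_le_lintegral _ (map_fst_cellwiseProd hS hrow' hcol')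
          (map_snd_cellwiseProd hS hrow' hcol')
    _ ≤ ∑ z, ENNReal.ofReal (p z) * ENNReal.ofReal (c' z) :=
        lintegral_cellwiseProd_le hS hS fun z => ENNReal.ofReal (c' z)
    _ = ENNReal.ofReal (∑ z, p z * c' z) := by
        simp only [← ENNReal.ofReal_mul (hp _)]
        rw [ENNReal.ofReal_sum_of_nonneg fun z _ => mul_nonneg (hp z) (hc' z)]
    _ ≤ ENNReal.ofReal T := ENNReal.ofReal_le_ofReal hpc

/-- The potentials of the discrete problem become admissible for `c` once the discretization error
is subtracted. -/
theorem KantorovichDualLE.comp_discretization {c : X → X → ℝ} (h : KantorovichDualLE c ν μ T)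
    (hS : Measurable S) {e : X → ℝ} (he : Measurable e) {M : ℝ} (heM : ∀ x, |e x| ≤ M)
    (hcc' : ∀ x y, |c x y - c' (S x, S y)| ≤ e x + e y) {u v : ι → ℝ}
    (huv : ∀ i j, u i + v j ≤ c' (i, j)) :
    ∫ x, u (S x) ∂ν + ∫ y, v (S y) ∂μ ≤ T + (∫ x, e x ∂ν + ∫ y, e y ∂μ) := by
  cases nonempty_fintype ι
  have hmeas (w : ι → ℝ) : Measurable fun x => w (S x) := (measurable_of_finite w).comp hS
  have hbdd (w : ι → ℝ) (x : X) : |w (S x)| ≤ ‖w‖ := norm_le_pi_norm w _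
  have hint (w : ι → ℝ) (ρ : Measure X) [IsProbabilityMeasure ρ] :
      ∫ x, (w (S x) - e x) ∂ρ = ∫ x, w (S x) ∂ρ - ∫ x, e x ∂ρ :=
    integral_sub (.of_bound (hmeas w).aestronglyMeasurable _ (ae_of_all _ (hbdd w)))
      (.of_bound he.aestronglyMeasurable _ (ae_of_all _ heM))
  have hbdd' (w : ι → ℝ) : ∃ B, ∀ x, |w (S x) - e x| ≤ B :=
    ⟨‖w‖ + M, fun x => (abs_sub _ _).trans (add_le_add (hbdd w x) (heM x))⟩
  have hsub := h (fun x => u (S x) - e x) (fun y => v (S y) - e y) ((hmeas u).sub he)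
    ((hmeas v).sub he) (hbdd' u) (hbdd' v) fun x y => by
      linarith [huv (S x) (S y), (abs_le.1 (hcc' x y)).1]
  rw [hint, hint] at hsub
  linarith

theorem KantorovichDualLE.optCost_le_add_discretization_error {c : X → X → ℝ}
    (h : KantorovichDualLE c ν μ T) (hS : Measurable S) (hc' : ∀ z, 0 ≤ c' z) {e : X → ℝ}
    (he : Measurable e) {M : ℝ} (heM : ∀ x, |e x| ≤ M)
    (hcc' : ∀ x y, |c x y - c' (S x, S y)| ≤ e x + e y) :
    optCost c ν μ ≤ ENNReal.ofReal (T + 2 * (∫ x, e x ∂ν + ∫ y, e y ∂μ)) := by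
  have he₀ (x : X) : 0 ≤ e x := by linarith [(abs_nonneg _).trans (hcc' x x)]
  have hofReal (ρ : Measure X) [IsProbabilityMeasure ρ] :
      ∫⁻ x, ENNReal.ofReal (e x) ∂ρ = ENNReal.ofReal (∫ x, e x ∂ρ) :=
    (ofReal_integral_eq_lintegral_ofReal
      (.of_bound he.aestronglyMeasurable _ (ae_of_all _ heM)) (ae_of_all _ he₀)).symm
  have hν : 0 ≤ ∫ x, e x ∂ν := integral_nonneg he₀
  have hμ : 0 ≤ ∫ y, e y ∂μ := integral_nonneg he₀
  have hT : 0 ≤ T + (∫ x, e x ∂ν + ∫ y, e y ∂μ) := by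
    simpa using h.comp_discretization (u := 0) (v := 0) hS he heM hcc' fun i j => by
      simpa using hc' (i, j)
  calc optCost c ν μ
      ≤ optCost (fun x y => c' (S x, S y)) ν μ +
          (∫⁻ x, ENNReal.ofReal (e x) ∂ν + ∫⁻ y, ENNReal.ofReal (e y) ∂μ) :=
        optCost_le_optCost_add he.ennreal_ofReal he.ennreal_ofReal fun x y => by
          rw [← ENNReal.ofReal_add (he₀ x) (he₀ y),
            ← ENNReal.ofReal_add (hc' _) (add_nonneg (he₀ x) (he₀ y))]
          exact ENNReal.ofReal_le_ofReal (by linarith [(abs_le.1 (hcc' x y)).2])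
    _ ≤ ENNReal.ofReal (T + (∫ x, e x ∂ν + ∫ y, e y ∂μ)) +
          ENNReal.ofReal (∫ x, e x ∂ν + ∫ y, e y ∂μ) := by
        rw [hofReal, hofReal, ← ENNReal.ofReal_add hν hμ]
        gcongr
        exact optCost_comp_le hS hc' fun u v => h.comp_discretization hS he heM hcc'
    _ = ENNReal.ofReal (T + 2 * (∫ x, e x ∂ν + ∫ y, e y ∂μ)) := by
        rw [← ENNReal.ofReal_add hT (add_nonneg hν hμ)]
        ring_nf

end Discretization

theorem tendsto_integral_min_mul_dist_approxOn {X : Type*} [PseudoMetricSpace X]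
    [SecondCountableTopology X] [MeasurableSpace X] [BorelSpace X] (ρ : Measure X)
    [IsFiniteMeasure ρ] (x₀ : X) {K M : ℝ} (hK : 0 ≤ K) (hM : 0 ≤ M) :
    Tendsto (fun n => ∫ x, min
      (K * dist x (SimpleFunc.approxOn id measurable_id univ x₀ (mem_univ x₀) n x)) M ∂ρ)
      atTop (𝓝 0) := by
  rw [← integral_zero X ℝ (μ := ρ)]
  refine tendsto_integral_of_dominated_convergence (fun _ => M)
    (fun n => ((measurable_id.dist (SimpleFunc.measurable _)).const_mul K |>.min
      measurable_const).aestronglyMeasurable)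
    (integrable_const M) (fun n => ae_of_all _ fun x => ?_) (ae_of_all _ fun x => ?_)
  · rw [Real.norm_of_nonneg (le_min (by positivity) hM)]
    exact min_le_right _ _
  · have h := SimpleFunc.tendsto_approxOn measurable_id (mem_univ x₀) (x := x) (by simp)
    have h := ((tendsto_const_nhds (x := x)).dist h).const_mul K |>.min
      (tendsto_const_nhds (x := M))
    simpa [hM] using h

/-- Kantorovich duality for bounded Lipschitz costs, in the direction that produces couplings. -/
theorem KantorovichDualLE.optCost_le {X : Type*} [MetricSpace X] [SecondCountableTopology X]
    [MeasurableSpace X] [BorelSpace X] {ν μ : Measure X} [IsProbabilityMeasure ν]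
    [IsProbabilityMeasure μ] {c : X → X → ℝ} {T : ℝ} (h : KantorovichDualLE c ν μ T) {K : ℝ≥0}
    (hc : LipschitzWith K (Function.uncurry c)) (hc₀ : ∀ x y, 0 ≤ c x y) {M : ℝ}
    (hcM : ∀ x y, c x y ≤ M) : optCost c ν μ ≤ ENNReal.ofReal T := by
  obtain ⟨x₀⟩ := nonempty_of_isProbabilityMeasure ν
  have hM : 0 ≤ M := (hc₀ x₀ x₀).trans (hcM x₀ x₀)
  set S : ℕ → SimpleFunc X X := SimpleFunc.approxOn id measurable_id univ x₀ (mem_univ x₀)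
  set e : ℕ → X → ℝ := fun n x => min (K * dist x (S n x)) M
  have hosc (n : ℕ) (x y : X) : |c x y - c (S n x) (S n y)| ≤ e n x + e n y := by
    have hLip : |c x y - c (S n x) (S n y)| ≤ K * max (dist x (S n x)) (dist y (S n y)) :=
      hc.dist_le_mul (x, y) (S n x, S n y)
    have hbdd : |c x y - c (S n x) (S n y)| ≤ M := abs_sub_le_of_nonneg_of_le
      (hc₀ _ _) (hcM _ _) (hc₀ _ _) (hcM _ _)
    rw [mul_max_of_nonneg _ _ K.coe_nonneg] at hLip
    calc |c x y - c (S n x) (S n y)| ≤ max (e n x) (e n y) :=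
          (le_min hLip hbdd).trans_eq (min_max_distrib_right _ _ _)
      _ ≤ e n x + e n y := max_le_add_of_nonneg (le_min (by positivity) hM)
          (le_min (by positivity) hM)
  have hbound (n : ℕ) :
      optCost c ν μ ≤ ENNReal.ofReal (T + 2 * (∫ x, e n x ∂ν + ∫ y, e n y ∂μ)) :=
    h.optCost_le_add_discretization_error (S := fun x => (⟨S n x, (S n).mem_range_self x⟩ :
        (S n).range)) (c' := fun z => c z.1 z.2) (S n).measurable.subtype_mk
      (fun _ => hc₀ _ _) ((measurable_id.dist (S n).measurable).const_mul _ |>.min measurable_const)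
      (M := M) (fun x => (abs_of_nonneg (le_min (by positivity) hM)).trans_le (min_le_right _ _))
      (hosc n)
  have hlim := ENNReal.tendsto_ofReal
    (((tendsto_integral_min_mul_dist_approxOn ν x₀ K.coe_nonneg hM).add
      (tendsto_integral_min_mul_dist_approxOn μ x₀ K.coe_nonneg hM)).const_mul 2 |>.const_add T)
  simpa using ge_of_tendsto' hlim hbound

end Kantorovich

section Truncation

variable {X : Type*} [MetricSpace X]

/-- The squared distance, truncated at the level `M ^ 2`. -/
def truncDistSq (M : ℝ≥0) (x y : X) : ℝ :=
  min (dist x y) M ^ 2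

theorem truncDistSq_nonneg (M : ℝ≥0) (x y : X) : 0 ≤ truncDistSq M x y :=
  sq_nonneg _

theorem truncDistSq_comm (M : ℝ≥0) (x y : X) : truncDistSq M x y = truncDistSq M y x := by
  rw [truncDistSq, truncDistSq, dist_comm]

theorem truncDistSq_le_sq (M : ℝ≥0) (x y : X) : truncDistSq M x y ≤ M ^ 2 :=
  pow_le_pow_left₀ (by positivity) (min_le_right _ _) 2

theorem truncDistSq_le_dist_sq (M : ℝ≥0) (x y : X) : truncDistSq M x y ≤ dist x y ^ 2 :=
  pow_le_pow_left₀ (by positivity) (min_le_left _ _) 2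

theorem truncDistSq_eq_dist_sq {M : ℝ≥0} {x y : X} (h : dist x y ≤ M) :
    truncDistSq M x y = dist x y ^ 2 := by
  rw [truncDistSq, min_eq_left h]

theorem monotone_truncDistSq (x y : X) : Monotone fun M => truncDistSq M x y := fun M N hMN =>
  pow_le_pow_left₀ (by positivity) (min_le_min_left _ (NNReal.coe_le_coe.2 hMN)) 2

theorem tendsto_truncDistSq (x y : X) :
    Tendsto (fun n : ℕ => truncDistSq n x y) atTop (𝓝 (dist x y ^ 2)) := by
  refine tendsto_const_nhds.congr' ?_
  filter_upwards [tendsto_natCast_atTop_atTop.eventually_ge_atTop (dist x y)] with n hn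
  exact (truncDistSq_eq_dist_sq (by simpa using hn)).symm

theorem lipschitzWith_truncDistSq (M : ℝ≥0) :
    LipschitzWith (2 * M * 2) (Function.uncurry (truncDistSq M : X → X → ℝ)) := by
  have hmin : LipschitzWith 2 fun z : X × X => min (dist z.1 z.2) (M : ℝ) :=
    LipschitzWith.dist.min_const _
  refine LipschitzWith.of_dist_le_mul fun z w => ?_
  set p := min (dist z.1 z.2) (M : ℝ)
  set q := min (dist w.1 w.2) (M : ℝ)
  calc dist (p ^ 2) (q ^ 2) = |p + q| * dist p q := by
        rw [Real.dist_eq, Real.dist_eq, sq_sub_sq, abs_mul]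
    _ ≤ 2 * M * (2 * dist z w) := by
        refine mul_le_mul ?_ (hmin.dist_le_mul z w) dist_nonneg (by positivity)
        rw [abs_of_nonneg (by positivity), two_mul]
        exact add_le_add (min_le_right _ _) (min_le_right _ _)
    _ = (2 * M * 2 : ℝ≥0) * dist z w := by
        push_cast
        ring

theorem continuous_truncDistSq_left (M : ℝ≥0) (y : X) : Continuous fun x => truncDistSq M x y :=
  ((continuous_id.dist continuous_const).min continuous_const).pow 2

theorem half_truncDistSq_le (M : ℝ≥0) (x y z : X) :
    truncDistSq M y z / 2 ≤ dist x z ^ 2 + truncDistSq M x y := by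
  have htri : min (dist y z) M ≤ dist x z + min (dist x y) M := by
    rw [← min_add_add_left]
    refine min_le_min ?_ (le_add_of_nonneg_left dist_nonneg)
    linarith [dist_triangle_left y z x]
  have hsq : min (dist y z) M ^ 2 ≤ (dist x z + min (dist x y) M) ^ 2 :=
    pow_le_pow_left₀ (by positivity) htri 2
  unfold truncDistSq
  nlinarith [sq_nonneg (dist x z - min (dist x y) M)]

/-- The squared distance to `x₀`, up to a factor `4`, outside the ball of radius `M / 2`. -/
noncomputable def tailDistSq (x₀ : X) (M : ℝ≥0) : X → ℝ :=
  {x | (M : ℝ) < 2 * dist x x₀}.indicator fun x => (2 * dist x x₀) ^ 2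

theorem tailDistSq_nonneg (x₀ : X) (M : ℝ≥0) (x : X) : 0 ≤ tailDistSq x₀ M x :=
  indicator_nonneg (fun _ _ => sq_nonneg _) x

theorem tailDistSq_le (x₀ : X) (M : ℝ≥0) (x : X) : tailDistSq x₀ M x ≤ (2 * dist x x₀) ^ 2 :=
  indicator_le_self' (fun _ _ => sq_nonneg _) x

/-- If the distance exceeds `M`, then one of the two points is at distance more than `M / 2`
from `x₀`. -/
theorem dist_sq_le_truncDistSq_add_tailDistSq (x₀ : X) (M : ℝ≥0) (x y : X) :
    dist x y ^ 2 ≤ truncDistSq M x y + (tailDistSq x₀ M x + tailDistSq x₀ M y) := by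
  have hx := tailDistSq_nonneg x₀ M x
  have hy := tailDistSq_nonneg x₀ M y
  rcases le_or_gt (dist x y) M with h | h
  · rw [truncDistSq_eq_dist_sq h]
    linarith
  have htail (z : X) (hz : dist x y ≤ 2 * dist z x₀) : dist x y ^ 2 ≤ tailDistSq x₀ M z := by
    have hmem : z ∈ {x | (M : ℝ) < 2 * dist x x₀} := h.trans_le hz
    rw [tailDistSq, indicator_of_mem hmem]
    exact pow_le_pow_left₀ dist_nonneg hz 2
  have htri := dist_triangle_right x y x₀
  have htrunc := truncDistSq_nonneg M x y
  rcases le_total (dist x x₀) (dist y x₀) with hxy | hxy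
  · linarith [htail y (by linarith)]
  · linarith [htail x (by linarith)]

variable [MeasurableSpace X] [OpensMeasurableSpace X]

theorem measurable_tailDistSq (x₀ : X) (M : ℝ≥0) : Measurable (tailDistSq x₀ M) := by
  have hdist : Continuous fun x => 2 * dist x x₀ :=
    continuous_const.mul (continuous_id.dist continuous_const)
  exact (hdist.pow 2).measurable.indicator (measurableSet_lt measurable_const hdist.measurable)

theorem tendsto_lintegral_tailDistSq {ρ : Measure X} {x₀ : X}
    (hρ : Integrable (fun x => dist x x₀ ^ 2) ρ) :
    Tendsto (fun n : ℕ => ∫⁻ x, ENNReal.ofReal (tailDistSq x₀ n x) ∂ρ) atTop (𝓝 0) := by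
  have hdom : Integrable (fun x => (2 * dist x x₀) ^ 2) ρ := by
    simpa only [mul_pow] using hρ.const_mul (2 ^ 2)
  rw [← lintegral_zero (μ := ρ)]
  refine tendsto_lintegral_of_dominated_convergence _
    (fun n => (measurable_tailDistSq x₀ n).ennreal_ofReal)
    (fun n => ae_of_all _ fun x => ENNReal.ofReal_le_ofReal (tailDistSq_le x₀ n x))
    hdom.lintegral_lt_top.ne (ae_of_all _ fun x => ?_)
  refine tendsto_const_nhds.congr' ?_
  filter_upwards [tendsto_natCast_atTop_atTop.eventually_ge_atTop (2 * dist x x₀)] with n hn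
  rw [tailDistSq, indicator_of_notMem (by simpa using hn), ENNReal.ofReal_zero]

variable {ν μ : Measure X} {x₀ : X} {K : ℝ≥0∞}

theorem lintegral_half_dist_sq_le_of_optCost_truncDistSq_le (x₀ : X)
    (h : ∀ M, optCost (truncDistSq M) ν μ ≤ K) :
    ∫⁻ y, ENNReal.ofReal (dist y x₀ ^ 2 / 2) ∂μ ≤
      ∫⁻ x, ENNReal.ofReal (dist x x₀ ^ 2) ∂ν + K := by
  have hmeas (M : ℝ≥0) : Measurable fun y => ENNReal.ofReal (truncDistSq M y x₀ / 2) :=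
    ((continuous_truncDistSq_left M x₀).div_const 2).measurable.ennreal_ofReal
  have hlim : Tendsto (fun n : ℕ => ∫⁻ y, ENNReal.ofReal (truncDistSq n y x₀ / 2) ∂μ) atTop
      (𝓝 (∫⁻ y, ENNReal.ofReal (dist y x₀ ^ 2 / 2) ∂μ)) := by
    refine lintegral_tendsto_of_tendsto_of_monotone (fun n => (hmeas n).aemeasurable)
      (ae_of_all _ fun y m n hmn => ENNReal.ofReal_le_ofReal ?_)
      (ae_of_all _ fun y => ENNReal.tendsto_ofReal ((tendsto_truncDistSq y x₀).div_const 2))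
    exact div_le_div_of_nonneg_right (monotone_truncDistSq y x₀ (Nat.cast_le.2 hmn)) zero_le_two
  refine le_of_tendsto' hlim fun n => ?_
  calc ∫⁻ y, ENNReal.ofReal (truncDistSq n y x₀ / 2) ∂μ
      ≤ ∫⁻ x, ENNReal.ofReal (dist x x₀ ^ 2) ∂ν + optCost (truncDistSq n) ν μ :=
        lintegral_le_lintegral_add_optCost
          ((continuous_id.dist continuous_const).pow 2).measurable.ennreal_ofReal (hmeas n)
          fun x y => by
            rw [← ENNReal.ofReal_add (sq_nonneg _) (truncDistSq_nonneg _ _ _)]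
            exact ENNReal.ofReal_le_ofReal (half_truncDistSq_le n x y x₀)
    _ ≤ ∫⁻ x, ENNReal.ofReal (dist x x₀ ^ 2) ∂ν + K := by gcongr; exact h n

theorem integrable_dist_sq_of_optCost_truncDistSq_le (hK : K ≠ ∞)
    (h : ∀ M, optCost (truncDistSq M) ν μ ≤ K) (hν : Integrable (fun x => dist x x₀ ^ 2) ν) :
    Integrable (fun y => dist y x₀ ^ 2) μ := by
  have hhalf : Integrable (fun y => dist y x₀ ^ 2 / 2) μ := by
    refine (lintegral_ofReal_ne_top_iff_integrable ?_ (ae_of_all _ fun y => by positivity)).1 ?_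
    · exact ((continuous_id.dist continuous_const).pow 2 |>.div_const 2).measurable
        |>.aestronglyMeasurable
    · exact ne_top_of_le_ne_top (ENNReal.add_ne_top.2 ⟨hν.lintegral_lt_top.ne, hK⟩)
        (lintegral_half_dist_sq_le_of_optCost_truncDistSq_le x₀ h)
  simpa using hhalf.mul_const 2

theorem optCost_dist_sq_le_of_optCost_truncDistSq_le (h : ∀ M, optCost (truncDistSq M) ν μ ≤ K)
    (hν : Integrable (fun x => dist x x₀ ^ 2) ν) (hμ : Integrable (fun y => dist y x₀ ^ 2) μ) :
    optCost (fun x y => dist x y ^ 2) ν μ ≤ K := by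
  have hlim := ((tendsto_lintegral_tailDistSq hν).add
    (tendsto_lintegral_tailDistSq hμ)).const_add K
  rw [add_zero, add_zero] at hlim
  have htail (n : ℕ) := (measurable_tailDistSq x₀ n).ennreal_ofReal
  refine ge_of_tendsto' hlim fun n => (optCost_le_optCost_add (c' := truncDistSq n) (htail n)
    (htail n) fun x y => ?_).trans (add_le_add_left (h n) _)
  rw [← ENNReal.ofReal_add (tailDistSq_nonneg _ _ _) (tailDistSq_nonneg _ _ _),
    ← ENNReal.ofReal_add (truncDistSq_nonneg _ _ _)
      (add_nonneg (tailDistSq_nonneg _ _ _) (tailDistSq_nonneg _ _ _))]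
  exact ENNReal.ofReal_le_ofReal (dist_sq_le_truncDistSq_add_tailDistSq x₀ n x y)

end Truncation

section Transport

variable {X : Type*} [MetricSpace X] [MeasurableSpace X] {C : ℝ} {μ ν : Measure X}
  [IsProbabilityMeasure μ]

theorem LogSobolev.kantorovichDualLE_dist_sq [OpensMeasurableSpace X] [IsProbabilityMeasure ν]
    (hμ : LogSobolev C μ) (hC : 0 < C) (hνμ : klDiv ν μ ≠ ∞) :
    KantorovichDualLE (fun x y => dist x y ^ 2) ν μ (C * (klDiv ν μ).toReal) := by
  rintro u v hu hv ⟨A, hA⟩ ⟨B, hB⟩ huv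
  have hB' (x : X) : |-v x| ≤ B := (abs_neg _).trans_le (hB x)
  set P := scaledHopfLax (fun x => -v x) 1
  have hP : Integrable P ν := .of_bound
    (continuous_scaledHopfLax hB' zero_le_one).measurable.aestronglyMeasurable _
    (ae_of_all _ fun x => abs_scaledHopfLax_le hB' 1 x)
  have huP : ∫ x, u x ∂ν ≤ ∫ x, P x ∂ν :=
    integral_mono (.of_bound hu.aestronglyMeasurable _ (ae_of_all _ hA)) hP fun x =>
      le_scaledHopfLax fun y => by linarith [huv x y]
  have hentropy := integral_le_toReal_klDiv_add_log_integral_exp hνμ (hP.const_mul C⁻¹)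
    (integrable_exp_mul_scaledHopfLax hB' zero_le_one C⁻¹)
  have hcgf := hμ.cgf_scaledHopfLax_one_le hC hB' hv.neg.aemeasurable
  simp only [integral_neg, cgf, mgf, mul_neg] at hcgf
  rw [integral_const_mul] at hentropy
  rw [← div_le_iff₀' hC, div_eq_inv_mul, mul_add]
  linarith [mul_le_mul_of_nonneg_left huP (inv_pos.2 hC).le]

variable [BorelSpace X] [SecondCountableTopology X]

theorem LogSobolev.optCost_truncDistSq_le [IsProbabilityMeasure ν] (hμ : LogSobolev C μ)
    (hC : 0 < C) (hνμ : klDiv ν μ ≠ ∞) (M : ℝ≥0) :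
    optCost (truncDistSq M) ν μ ≤ ENNReal.ofReal (C * (klDiv ν μ).toReal) :=
  ((hμ.kantorovichDualLE_dist_sq hC hνμ).of_cost_le (truncDistSq_le_dist_sq M)).optCost_le
    (lipschitzWith_truncDistSq M) (truncDistSq_nonneg M) (truncDistSq_le_sq M)

/-- Conditioning `μ` on a ball gives a measure with finite second moment, at finite transport cost
from `μ`. -/
theorem LogSobolev.integrable_dist_sq (hμ : LogSobolev C μ) (hC : 0 < C) (x₀ : X) :
    Integrable (fun x => dist x x₀ ^ 2) μ := by
  obtain ⟨R, hR⟩ : ∃ R : ℕ, μ (Metric.ball x₀ R) ≠ 0 := by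
    by_contra! hnull
    have := measure_iUnion_null hnull
    rw [Metric.iUnion_ball_nat, measure_univ] at this
    exact one_ne_zero this
  have hball : MeasurableSet (Metric.ball x₀ (R : ℝ)) := measurableSet_ball
  have := cond_isProbabilityMeasure hR
  have hbdd : Integrable (fun x => dist x x₀ ^ 2) (μ[|Metric.ball x₀ R]) := by
    refine .of_bound ((continuous_id.dist continuous_const).pow 2).measurable.aestronglyMeasurable
      ((R : ℝ) ^ 2) ?_
    filter_upwards [ae_cond_mem hball] with x hx
    rw [Real.norm_of_nonneg (sq_nonneg _)]
    exact pow_le_pow_left₀ dist_nonneg (Metric.mem_ball.1 hx).le 2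
  exact integrable_dist_sq_of_optCost_truncDistSq_le ENNReal.ofReal_ne_top
    (hμ.optCost_truncDistSq_le hC (klDiv_cond_ne_top hball)) hbdd

end Transport

end OttoVillani

open OttoVillani in
theorem otto_villani_general {X : Type*} [MetricSpace X] [MeasurableSpace X] [BorelSpace X]
    [SecondCountableTopology X] {C : ℝ} {μ ν : Measure X} [IsProbabilityMeasure μ]
    [IsProbabilityMeasure ν] (hμ : LogSobolev C μ) (hC : 0 < C) :
    optCost (fun x y => dist x y ^ 2) ν μ ≤ ENNReal.ofReal C * relEntropy ν μ := by
  rw [relEntropy_eq_klDiv]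
  by_cases hνμ : klDiv ν μ = ∞
  · simp [hνμ, ENNReal.mul_top, hC]
  obtain ⟨x₀⟩ := nonempty_of_isProbabilityMeasure μ
  have htrunc := hμ.optCost_truncDistSq_le hC hνμ
  have hμ₂ := hμ.integrable_dist_sq hC x₀
  have hν₂ : Integrable (fun x => dist x x₀ ^ 2) ν :=
    integrable_dist_sq_of_optCost_truncDistSq_le ENNReal.ofReal_ne_top (fun M => by
      simpa only [truncDistSq_comm M] using (optCost_swap_le _ ν μ).trans (htrunc M)) hμ₂
  calc optCost (fun x y => dist x y ^ 2) ν μ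
      ≤ ENNReal.ofReal (C * (klDiv ν μ).toReal) :=
        optCost_dist_sq_le_of_optCost_truncDistSq_le htrunc hν₂ hμ₂
    _ = ENNReal.ofReal C * klDiv ν μ := by
        rw [ENNReal.ofReal_mul hC.le, ENNReal.ofReal_toReal hνμ]

/-- Otto–Villani theorem: if `μ` on `ℝ^k` satisfies the logarithmic Sobolev inequality
`Ent_μ(f²) ≤ C ∫ |∇f|² dμ` for every Lipschitz `f`, then it satisfies Talagrand's
inequality `T₂(C)`: `W₂²(ν,μ) ≤ C H(ν|μ)` for all probability measures `ν`. -/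
theorem otto_villani (k : ℕ) (C : ℝ) (hC : 0 < C)
    (μ : Measure (EuclideanSpace ℝ (Fin k))) [IsProbabilityMeasure μ]
    (hLS : ∀ f : EuclideanSpace ℝ (Fin k) → ℝ, (∃ L : NNReal, LipschitzWith L f) →
      ∫ x, f x ^ 2 * Real.log (f x ^ 2) ∂μ -
          (∫ x, f x ^ 2 ∂μ) * Real.log (∫ x, f x ^ 2 ∂μ) ≤
        C * ∫ x, localSlope f x ^ 2 ∂μ)
    (ν : Measure (EuclideanSpace ℝ (Fin k))) [IsProbabilityMeasure ν] :
    optCost (fun x y => dist x y ^ 2) ν μ ≤ ENNReal.ofReal C * relEntropy ν μ :=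
  otto_villani_general (fun f hf _ => hLS f hf) hC
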